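/- arXiv:1309.0908 — 2 statements merged into one kernel-verified Lean document; each statement's English description precedes it below -/
import Mathlib

section
/- For every prime p ≥ 5, the congruence H_{p−1}(1) + (1/3) p² H_{p−1}(2,1) ≡ 0 (mod p⁴) holds; that is, the p-adic valuation of H_{p−1}(1) + (1/3) p² H_{p−1}(2,1) is at least 4. -/
/-- The multiple harmonic sum `H_n(s₁,…,s_k) = ∑_{n ≥ n₁ > … > n_k ≥ 1} 1/(n₁^{s₁} ⋯ n_k^{s_k})`,
with `H_n(∅) = 1`. -/
def MHS : ℕ → List ℕ → ℚ
  | _, [] => 1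
  | n, s :: t => ∑ m ∈ Finset.Icc 1 n, (1 / (m : ℚ) ^ s) * MHS (m - 1) t

/-!
Let `P_k(x) = ∏_{j=1}^k (1 - x/j) = (-1)^k binom(x-1, k)`. Pascal's rule for the `P_k` yields
`n ∑_{k=1}^n P_{k-1}(n)/k² = H_n(1)`, and for an odd prime `p` also
`H_{p-1}(1) = p ∑_{k=1}^{p-1} P_{k-1}(p)/k²`. Expanding the latter in powers of `p`,
`H_{p-1}(1) ≡ p H_{p-1}(2) - p² H_{p-1}(2,1) + p³ H_{p-1}(2,1,1)  (mod p⁴)`.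
Pairing `k` with `p - k` gives `4 H_{p-1}(1) + 2p H_{p-1}(2) ≡ p³ H_{p-1}(4)  (mod p⁴)`, and
eliminating `H_{p-1}(2)` leaves
`6 H_{p-1}(1) + 2p² H_{p-1}(2,1) ≡ p³ (2 H_{p-1}(2,1,1) + H_{p-1}(4))  (mod p⁴)`.

It remains to see that the last bracket vanishes modulo `p`. Since `∑_{x ≠ 0} f(x)/x²` is minus the
coefficient of `x²` in `f` for every polynomial `f` of degree less than `p - 1` over `𝔽_p`, the sum
`H_{k-1}(1,1)` equals `-∑_m P_{k-1}(m)/m²`. Hence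
`H_{p-1}(2,1,1) = -∑_m (1/m²) ∑_k P_{k-1}(m)/k² = -∑_m H_m(1)/m³ = -H_{p-1}(3,1) - H_{p-1}(4)`,
while `2 H_{p-1}(3,1) + H_{p-1}(4) = 0` by pairing `m` with `p - m` again.
-/

open Finset Polynomial

section NestedSum

variable {R S : Type*} [Semiring R] [Semiring S]

/-- The nested sum `∑_{n > k₁ > … > k_r ≥ 0} u(k₁)^{s₁} ⋯ u(k_r)^{s_r}`. With `u k = 1 / (k + 1)`
this is the multiple harmonic sum `H_n(s₁,…,s_r)`, in whichever ring the reciprocals are taken. -/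
def nestedSum (u : ℕ → R) : ℕ → List ℕ → R
  | _, [] => 1
  | n, s :: t => ∑ k ∈ range n, u k ^ s * nestedSum u k t

@[simp]
lemma nestedSum_nil (u : ℕ → R) (n : ℕ) : nestedSum u n [] = 1 := by
  rw [nestedSum]

lemma nestedSum_cons (u : ℕ → R) (n s : ℕ) (t : List ℕ) :
    nestedSum u n (s :: t) = ∑ k ∈ range n, u k ^ s * nestedSum u k t := by
  rw [nestedSum]

@[simp]
lemma nestedSum_zero_cons (u : ℕ → R) (s : ℕ) (t : List ℕ) : nestedSum u 0 (s :: t) = 0 := by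
  simp [nestedSum_cons]

lemma nestedSum_singleton (u : ℕ → R) (n s : ℕ) :
    nestedSum u n [s] = ∑ k ∈ range n, u k ^ s := by
  simp [nestedSum_cons]

lemma nestedSum_succ_cons (u : ℕ → R) (n s : ℕ) (t : List ℕ) :
    nestedSum u (n + 1) (s :: t) = nestedSum u n (s :: t) + u n ^ s * nestedSum u n t := by
  rw [nestedSum_cons, sum_range_succ, ← nestedSum_cons]

lemma map_nestedSum (f : R →+* S) (u : ℕ → R) (n : ℕ) (l : List ℕ) :
    f (nestedSum u n l) = nestedSum (fun k ↦ f (u k)) n l := by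
  induction l generalizing n with
  | nil => simp
  | cons s t ih => simp only [nestedSum_cons, map_sum, map_mul, map_pow, ih]

lemma nestedSum_congr {u v : ℕ → R} {n : ℕ} (h : ∀ k < n, u k = v k) (l : List ℕ) :
    nestedSum u n l = nestedSum v n l := by
  induction l generalizing n with
  | nil => simp
  | cons s t ih =>
    simp only [nestedSum_cons]
    refine sum_congr rfl fun k hk ↦ ?_
    have hkn : k < n := mem_range.1 hk
    rw [h k hkn, ih fun j hj ↦ h j (hj.trans hkn)]

lemma mhs_eq_nestedSum (n : ℕ) (l : List ℕ) :
    MHS n l = nestedSum (fun k ↦ ((k : ℚ) + 1)⁻¹) n l := by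
  induction l generalizing n with
  | nil => rw [MHS, nestedSum_nil]
  | cons s t ih =>
    rw [MHS, nestedSum_cons, ← Ico_add_one_right_eq_Icc, sum_Ico_eq_sum_range]
    simp [ih, add_comm]

end NestedSum

section OneSubProd

variable {R : Type*} [CommRing R]

/-- The polynomial `∏_{i < k} (1 - u(i) X)`, whose coefficients are the elementary symmetric
functions of `u 0, …, u (k - 1)` up to sign. With `u i = 1 / (i + 1)` its value at `x` is
`(-1)^k binom(x - 1, k)`. -/
noncomputable def oneSubProd (u : ℕ → R) (k : ℕ) : R[X] := ∏ i ∈ range k, (1 - C (u i) * X)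

lemma oneSubProd_succ (u : ℕ → R) (k : ℕ) :
    oneSubProd u (k + 1) = oneSubProd u k * (1 - C (u k) * X) :=
  prod_range_succ _ k

@[simp]
lemma eval_oneSubProd_zero (u : ℕ → R) (x : R) : (oneSubProd u 0).eval x = 1 := by
  simp [oneSubProd]

lemma eval_oneSubProd_succ (u : ℕ → R) (k : ℕ) (x : R) :
    (oneSubProd u (k + 1)).eval x = (oneSubProd u k).eval x * (1 - u k * x) := by
  simp [oneSubProd_succ]

lemma natDegree_oneSubProd_le (u : ℕ → R) (k : ℕ) : (oneSubProd u k).natDegree ≤ k := by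
  have hfactor (i : ℕ) : (1 - C (u i) * X).natDegree ≤ 1 := by compute_degree
  simpa [oneSubProd] using (natDegree_prod_le (range k) _).trans
    (sum_le_card_nsmul (range k) _ 1 fun i _ ↦ hfactor i)

lemma coeff_oneSubProd (u : ℕ → R) (k m : ℕ) :
    (oneSubProd u k).coeff m = (-1) ^ m * nestedSum u k (List.replicate m 1) := by
  induction k generalizing m with
  | zero => cases m <;> simp [oneSubProd, coeff_one, List.replicate_succ]
  | succ k ih =>
    have hmul : oneSubProd u (k + 1) = oneSubProd u k - C (u k) * (oneSubProd u k * X) := by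
      rw [oneSubProd_succ]; ring
    rw [hmul, coeff_sub, coeff_C_mul, ih]
    cases m with
    | zero => simp
    | succ m => rw [coeff_mul_X, ih, List.replicate_succ, nestedSum_succ_cons]; ring

lemma pow_dvd_eval_sub_sum_range (f : R[X]) (x : R) (n : ℕ) :
    x ^ n ∣ f.eval x - ∑ i ∈ range n, f.coeff i * x ^ i := by
  rw [eval_eq_sum_range' (show f.natDegree < n + (f.natDegree + 1) by omega), sum_range_add,
    add_sub_cancel_left]
  exact dvd_sum fun i _ ↦ Dvd.intro_left (f.coeff (n + i) * x ^ i) (by ring)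

lemma pow_dvd_sum_pow_mul_eval_oneSubProd_sub (u : ℕ → R) (n s d : ℕ) (x : R) :
    x ^ d ∣ ∑ k ∈ range n, u k ^ s * (oneSubProd u k).eval x -
      ∑ m ∈ range d, (-x) ^ m * nestedSum u n (s :: List.replicate m 1) := by
  have hexpand : ∑ m ∈ range d, (-x) ^ m * nestedSum u n (s :: List.replicate m 1) =
      ∑ k ∈ range n, u k ^ s * ∑ m ∈ range d, (oneSubProd u k).coeff m * x ^ m := by
    simp only [nestedSum_cons, coeff_oneSubProd, mul_sum]
    rw [sum_comm]
    refine sum_congr rfl fun k _ ↦ sum_congr rfl fun m _ ↦ ?_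
    rw [neg_pow]; ring
  rw [hexpand, ← sum_sub_distrib]
  refine dvd_sum fun k _ ↦ ?_
  rw [← mul_sub]
  exact (pow_dvd_eval_sub_sum_range _ x d).mul_left _

lemma mul_sum_mul_eval_oneSubProd (u : ℕ → R) (n : ℕ) (x : R) :
    x * ∑ k ∈ range n, u k * (oneSubProd u k).eval x = 1 - (oneSubProd u n).eval x := by
  induction n with
  | zero => simp
  | succ n ih => rw [sum_range_succ, mul_add, ih, eval_oneSubProd_succ]; ring

end OneSubProd

section Reciprocals

variable {R S : Type*} [CommRing R] [CommRing S] {u : ℕ → R} {n : ℕ}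

/-- The numbers `1, …, n` are invertible in the ring, with inverses `u 0, …, u (n - 1)`. This allows
the same argument to run in `ℤ_[p]`, in `ZMod p` and in `ℚ_[p]`. -/
def IsRecipSeq (u : ℕ → R) (n : ℕ) : Prop := ∀ i < n, ((i : R) + 1) * u i = 1

lemma IsRecipSeq.mono (hu : IsRecipSeq u n) {m : ℕ} (hmn : m ≤ n) : IsRecipSeq u m :=
  fun i hi ↦ hu i (hi.trans_le hmn)

lemma IsRecipSeq.map (hu : IsRecipSeq u n) (f : R →+* S) : IsRecipSeq (fun i ↦ f (u i)) n :=
  fun i hi ↦ by simpa using congrArg f (hu i hi)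

lemma IsRecipSeq.eval_oneSubProd_eq_zero (hu : IsRecipSeq u n) {m k : ℕ} (hm : m < n)
    (hmk : m < k) : (oneSubProd u k).eval ((m : R) + 1) = 0 := by
  rw [oneSubProd, eval_prod]
  refine prod_eq_zero (mem_range.2 hmk) ?_
  simp [mul_comm (u m), hu m hm]

/-- Pascal's rule `binom(x, k + 1) = binom(x - 1, k + 1) + binom(x - 1, k)`. -/
lemma IsRecipSeq.eval_oneSubProd_add_one (hu : IsRecipSeq u n) {k : ℕ} (hk : k < n) (x : R) :
    (oneSubProd u (k + 1)).eval (x + 1) =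
      (oneSubProd u (k + 1)).eval x - (oneSubProd u k).eval x := by
  induction k with
  | zero =>
    have h : u 0 = 1 := by simpa using hu 0 hk
    simp [eval_oneSubProd_succ, h]
  | succ k ih =>
    have hinv : u k - u (k + 1) = u k * u (k + 1) := by
      have h₁ := hu k (by omega)
      have h₂ := hu (k + 1) hk
      push_cast at h₂
      linear_combination u (k + 1) * h₁ - u k * h₂
    rw [eval_oneSubProd_succ, ih (by omega), eval_oneSubProd_succ u (k + 1),
      eval_oneSubProd_succ u k]
    linear_combination (-x * (oneSubProd u k).eval x) * hinv

lemma IsRecipSeq.eval_oneSubProd_self (hu : IsRecipSeq u n) :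
    (oneSubProd u n).eval ((n : R) + 1) = (-1) ^ n := by
  induction n with
  | zero => simp
  | succ n ih =>
    rw [Nat.cast_succ, hu.eval_oneSubProd_add_one n.lt_succ_self,
      hu.eval_oneSubProd_eq_zero n.lt_succ_self n.lt_succ_self, ih (hu.mono n.le_succ)]
    ring

lemma IsRecipSeq.sum_mul_eval_oneSubProd_succ (hu : IsRecipSeq u n) :
    ∑ k ∈ range n, u k * (oneSubProd u (k + 1)).eval ((n : R) + 1) = -nestedSum u n [1] := by
  induction n with
  | zero => simp
  | succ n ih =>
    have hpascal : ∀ k ∈ range (n + 1),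
        u k * (oneSubProd u (k + 1)).eval (((n + 1 : ℕ) : R) + 1) =
          u k * (oneSubProd u (k + 1)).eval ((n : R) + 1) -
            u k * (oneSubProd u k).eval ((n : R) + 1) := fun k hk ↦ by
      rw [Nat.cast_succ, hu.eval_oneSubProd_add_one (mem_range.1 hk), mul_sub]
    have hvanish := hu.eval_oneSubProd_eq_zero n.lt_succ_self n.lt_succ_self
    have htelescope : ∑ k ∈ range (n + 1), u k * (oneSubProd u k).eval ((n : R) + 1) = u n := by
      have h := mul_sum_mul_eval_oneSubProd u (n + 1) ((n : R) + 1)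
      rw [hvanish] at h
      linear_combination u n * h -
        (∑ k ∈ range (n + 1), u k * (oneSubProd u k).eval ((n : R) + 1)) * hu n n.lt_succ_self
    rw [sum_congr rfl hpascal, sum_sub_distrib, htelescope, sum_range_succ, hvanish,
      ih (hu.mono n.le_succ), nestedSum_succ_cons]
    rw [nestedSum_nil]; ring

lemma IsRecipSeq.sq_mul_sum_sq_mul_eval_oneSubProd (hu : IsRecipSeq u n) :
    ((n : R) + 1) ^ 2 * ∑ k ∈ range n, u k ^ 2 * (oneSubProd u k).eval ((n : R) + 1) =
      ((n : R) + 1) * nestedSum u n [1] + 1 - (-1) ^ n := by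
  set x : R := (n : R) + 1
  have hrec : ∑ k ∈ range n, u k * (oneSubProd u (k + 1)).eval x =
      ∑ k ∈ range n, u k * (oneSubProd u k).eval x -
        x * ∑ k ∈ range n, u k ^ 2 * (oneSubProd u k).eval x := by
    rw [mul_sum, ← sum_sub_distrib]
    refine sum_congr rfl fun k _ ↦ ?_
    rw [eval_oneSubProd_succ]; ring
  have htelescope := mul_sum_mul_eval_oneSubProd u n x
  rw [hu.eval_oneSubProd_self] at htelescope
  linear_combination htelescope + x * hrec - x * hu.sum_mul_eval_oneSubProd_succ

lemma IsRecipSeq.mul_sum_sq_mul_eval_oneSubProd (hu : IsRecipSeq u n) {m : ℕ} (hm : m < n) :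
    ((m : R) + 1) * ∑ k ∈ range n, u k ^ 2 * (oneSubProd u k).eval ((m : R) + 1) =
      nestedSum u (m + 1) [1] := by
  have htrunc : ∑ k ∈ range n, u k ^ 2 * (oneSubProd u k).eval ((m : R) + 1) =
      ∑ k ∈ range (m + 1), u k ^ 2 * (oneSubProd u k).eval ((m : R) + 1) := by
    refine (sum_subset (range_mono hm) fun k _ hk ↦ ?_).symm
    rw [hu.eval_oneSubProd_eq_zero hm (by simpa using hk), mul_zero]
  have hsum := (hu.mono hm.le).sq_mul_sum_sq_mul_eval_oneSubProd
  have hinv := hu m hm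
  rw [htrunc, sum_range_succ, (hu.mono hm.le).eval_oneSubProd_self, nestedSum_succ_cons,
    nestedSum_nil]
  set x : R := (m : R) + 1
  set T := ∑ k ∈ range m, u k ^ 2 * (oneSubProd u k).eval x
  linear_combination u m * hsum + (nestedSum u m [1] + u m * (-1) ^ m - x * T) * hinv

lemma IsRecipSeq.add_reflect (hu : IsRecipSeq u n) {i : ℕ} (hi : i < n) :
    u i + u (n - 1 - i) = ((n : R) + 1) * (u i * u (n - 1 - i)) := by
  have hcast : (i : R) + 1 + ((n - 1 - i : ℕ) + 1) = n + 1 := by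
    have h : i + 1 + (n - 1 - i + 1) = n + 1 := by omega
    exact_mod_cast congrArg (Nat.cast (R := R)) h
  have h₁ := hu i hi
  have h₂ := hu (n - 1 - i) (by omega)
  linear_combination -u (n - 1 - i) * h₁ - u i * h₂ + u i * u (n - 1 - i) * hcast

lemma IsRecipSeq.four_mul_nestedSum_one_add (hu : IsRecipSeq u n) :
    4 * nestedSum u n [1] + 2 * ((n : R) + 1) * nestedSum u n [2] =
      ((n : R) + 1) ^ 3 * ∑ i ∈ range n, (u i * u (n - 1 - i)) ^ 2 := by
  set x : R := (n : R) + 1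
  have hpair (i : ℕ) (hi : i ∈ range n) :
      2 * (u i + u (n - 1 - i)) + x * (u i ^ 2 + u (n - 1 - i) ^ 2) =
        x ^ 3 * (u i * u (n - 1 - i)) ^ 2 := by
    have h := hu.add_reflect (mem_range.1 hi)
    linear_combination (2 + x * (u i + u (n - 1 - i)) + x ^ 2 * (u i * u (n - 1 - i))) * h
  have hreflect (s : ℕ) : ∑ i ∈ range n, u (n - 1 - i) ^ s = ∑ i ∈ range n, u i ^ s :=
    sum_range_reflect (fun i ↦ u i ^ s) n
  have hone := hreflect 1
  simp only [pow_one] at hone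
  have hsum := sum_congr rfl hpair
  simp only [sum_add_distrib, ← mul_sum, hone, hreflect 2] at hsum
  simp only [nestedSum_singleton, pow_one]
  linear_combination hsum

lemma IsRecipSeq.reflect_eq_neg (hu : IsRecipSeq u n) (hn : (n : R) + 1 = 0) {i : ℕ}
    (hi : i < n) : u (n - 1 - i) = -u i := by
  linear_combination hu.add_reflect hi + u i * u (n - 1 - i) * hn

lemma IsRecipSeq.nestedSum_one_eq_zero (hu : IsRecipSeq u n) (hn : (n : R) + 1 = 0)
    (h2 : 2 ≤ n) : nestedSum u n [1] = 0 := by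
  have hhalf : 2 * u 1 = 1 := by simpa [one_add_one_eq_two] using hu 1 h2
  have h4 : 4 * nestedSum u n [1] = 0 := by
    simpa [hn] using hu.four_mul_nestedSum_one_add
  linear_combination u 1 ^ 2 * h4 - (2 * u 1 + 1) * nestedSum u n [1] * hhalf

lemma IsRecipSeq.nestedSum_one_reflect (hu : IsRecipSeq u n) (hn : (n : R) + 1 = 0)
    (h2 : 2 ≤ n) {k : ℕ} (hk : k ≤ n) : nestedSum u (n - k) [1] = nestedSum u k [1] := by
  induction k with
  | zero => simpa using hu.nestedSum_one_eq_zero hn h2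
  | succ k ih =>
    have hreflect := hu.reflect_eq_neg hn hk
    have hprev := ih (by omega)
    rw [show n - k = n - 1 - k + 1 by omega, nestedSum_succ_cons, nestedSum_nil] at hprev
    rw [show n - (k + 1) = n - 1 - k by omega, nestedSum_succ_cons, nestedSum_nil]
    linear_combination hprev - hreflect

lemma IsRecipSeq.two_mul_nestedSum_three_one (hu : IsRecipSeq u n) (hn : (n : R) + 1 = 0)
    (h2 : 2 ≤ n) : 2 * nestedSum u n [3, 1] = -nestedSum u n [4] := by
  have hreflect : nestedSum u n [3, 1] = -nestedSum u n [3, 1] - nestedSum u n [4] := by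
    conv_lhs => rw [nestedSum_cons, ← sum_range_reflect]
    rw [nestedSum_cons, nestedSum_singleton, ← sum_neg_distrib, ← sum_sub_distrib]
    refine sum_congr rfl fun k hk ↦ ?_
    have hk : k < n := mem_range.1 hk
    rw [hu.reflect_eq_neg hn hk, show n - 1 - k = n - (k + 1) by omega,
      hu.nestedSum_one_reflect hn h2 hk, nestedSum_succ_cons, nestedSum_nil]
    ring
  linear_combination hreflect

end Reciprocals

section FiniteField

variable {K : Type*} [Field K] [Fintype K] [DecidableEq K]

lemma sum_units_inv_pow_mul_pow {m d : ℕ} (hm : m < Fintype.card K - 1)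
    (hd : d < Fintype.card K - 1) :
    ∑ x : Kˣ, (x : K)⁻¹ ^ m * (x : K) ^ d = if d = m then -1 else 0 := by
  set q := Fintype.card K with hq
  have hexp (x : Kˣ) : (x : K)⁻¹ ^ m * (x : K) ^ d = (x : K) ^ (q - 1 - m + d) := by
    have h1 : (x : K) ^ (q - 1) = 1 := FiniteField.pow_card_sub_one_eq_one _ x.ne_zero
    rw [pow_add, pow_sub₀ _ x.ne_zero hm.le, h1, one_mul, inv_pow]
  have hdvd : q - 1 ∣ q - 1 - m + d ↔ d = m := by
    refine ⟨fun ⟨c, hc⟩ ↦ ?_, fun h ↦ ⟨1, by omega⟩⟩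
    have hc0 : c ≠ 0 := by rintro rfl; omega
    have hc2 : c < 2 := lt_of_mul_lt_mul_left (a := q - 1) (by omega) (Nat.zero_le _)
    obtain rfl : c = 1 := by omega
    omega
  simp only [hexp, FiniteField.sum_pow_units, ← hq, hdvd]

lemma sum_units_inv_pow_mul_eval {f : K[X]} (hf : f.natDegree < Fintype.card K - 1) {m : ℕ}
    (hm : m < Fintype.card K - 1) :
    ∑ x : Kˣ, (x : K)⁻¹ ^ m * f.eval (x : K) = -f.coeff m := by
  set q := Fintype.card K
  calc ∑ x : Kˣ, (x : K)⁻¹ ^ m * f.eval (x : K)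
      = ∑ d ∈ range (q - 1), f.coeff d * ∑ x : Kˣ, (x : K)⁻¹ ^ m * (x : K) ^ d := by
        simp only [eval_eq_sum_range' hf, mul_sum]
        rw [sum_comm]
        exact sum_congr rfl fun d _ ↦ sum_congr rfl fun x _ ↦ by ring
    _ = ∑ d ∈ range (q - 1), f.coeff d * if d = m then -1 else 0 :=
        sum_congr rfl fun d hd ↦ by rw [sum_units_inv_pow_mul_pow hm (mem_range.1 hd)]
    _ = -f.coeff m := by simp [hm]

variable {p : ℕ} [Fact p.Prime]

lemma natCast_pred_prime_add_one {R : Type*} [Ring R] : ((p - 1 : ℕ) : R) + 1 = p := by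
  rw [Nat.cast_pred (Fact.out : p.Prime).pos, sub_add_cancel]

lemma sum_range_natCast_add_one_eq_sum_units {M : Type*} [AddCommMonoid M] (g : ZMod p → M) :
    ∑ i ∈ range (p - 1), g ((i : ZMod p) + 1) = ∑ x : (ZMod p)ˣ, g x := by
  have hval (x : (ZMod p)ˣ) : (x : ZMod p).val - 1 + 1 = (x : ZMod p).val :=
    Nat.sub_add_cancel (ZMod.val_pos.2 x.ne_zero)
  have hcast (x : (ZMod p)ˣ) : (((x : ZMod p).val - 1 : ℕ) : ZMod p) + 1 = x := by
    rw [← Nat.cast_succ, Nat.succ_eq_add_one, hval, ZMod.natCast_zmod_val]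
  symm
  refine sum_bij (fun x _ ↦ (x : ZMod p).val - 1) (fun x _ ↦ ?_) (fun x _ y _ hxy ↦ ?_)
    (fun i hi ↦ ?_) fun x _ ↦ by rw [hcast]
  · have := ZMod.val_lt (x : ZMod p)
    have := hval x
    rw [mem_range]; omega
  · ext
    rw [← hcast x, ← hcast y, hxy]
  · have hlt : i + 1 < p := by have := mem_range.1 hi; omega
    have hmod : ((i + 1 : ℕ) : ZMod p).val = i + 1 := ZMod.val_cast_of_lt hlt
    refine ⟨Units.mk0 ((i + 1 : ℕ) : ZMod p) fun h ↦ ?_, mem_univ _, ?_⟩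
    · simp [h] at hmod
    · rw [Units.val_mk0, hmod, Nat.add_sub_cancel]

variable {v : ℕ → ZMod p}

lemma IsRecipSeq.sum_sq_mul_eval_oneSubProd (hv : IsRecipSeq v (p - 1)) (hp : 3 < p) {k : ℕ}
    (hk : k < p - 1) :
    ∑ m ∈ range (p - 1), v m ^ 2 * (oneSubProd v k).eval ((m : ZMod p) + 1) =
      -nestedSum v k [1, 1] := by
  have hinv (m : ℕ) (hm : m ∈ range (p - 1)) : v m = ((m : ZMod p) + 1)⁻¹ :=
    eq_inv_of_mul_eq_one_right (hv m (mem_range.1 hm))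
  calc ∑ m ∈ range (p - 1), v m ^ 2 * (oneSubProd v k).eval ((m : ZMod p) + 1)
      = ∑ x : (ZMod p)ˣ, (x : ZMod p)⁻¹ ^ 2 * (oneSubProd v k).eval (x : ZMod p) := by
        rw [← sum_range_natCast_add_one_eq_sum_units fun x ↦ x⁻¹ ^ 2 * (oneSubProd v k).eval x]
        exact sum_congr rfl fun m hm ↦ by rw [hinv m hm]
    _ = -(oneSubProd v k).coeff 2 := by
        apply sum_units_inv_pow_mul_eval <;> rw [ZMod.card]
        · exact (natDegree_oneSubProd_le v k).trans_lt hk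
        · omega
    _ = -nestedSum v k [1, 1] := by simp [coeff_oneSubProd, List.replicate_succ]

lemma IsRecipSeq.nestedSum_two_one_one (hv : IsRecipSeq v (p - 1)) (hp : 3 < p) :
    nestedSum v (p - 1) [2, 1, 1] = -nestedSum v (p - 1) [3, 1] - nestedSum v (p - 1) [4] := by
  have hinner (m : ℕ) (hm : m ∈ range (p - 1)) :
      v m ^ 2 * ∑ k ∈ range (p - 1), v k ^ 2 * (oneSubProd v k).eval ((m : ZMod p) + 1) =
        v m ^ 3 * nestedSum v m [1] + v m ^ 4 := by
    have h := hv.mul_sum_sq_mul_eval_oneSubProd (mem_range.1 hm)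
    rw [nestedSum_succ_cons, nestedSum_nil] at h
    linear_combination v m ^ 3 * h - v m ^ 2 *
      (∑ k ∈ range (p - 1), v k ^ 2 * (oneSubProd v k).eval ((m : ZMod p) + 1)) *
        hv m (mem_range.1 hm)
  calc nestedSum v (p - 1) [2, 1, 1]
      = -∑ k ∈ range (p - 1), v k ^ 2 *
          ∑ m ∈ range (p - 1), v m ^ 2 * (oneSubProd v k).eval ((m : ZMod p) + 1) := by
        rw [nestedSum_cons, ← sum_neg_distrib]
        refine sum_congr rfl fun k hk ↦ ?_
        rw [hv.sum_sq_mul_eval_oneSubProd hp (mem_range.1 hk)]; ring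
    _ = -∑ m ∈ range (p - 1), v m ^ 2 *
          ∑ k ∈ range (p - 1), v k ^ 2 * (oneSubProd v k).eval ((m : ZMod p) + 1) := by
        simp only [mul_sum]
        rw [sum_comm]
        simp only [mul_left_comm]
    _ = -nestedSum v (p - 1) [3, 1] - nestedSum v (p - 1) [4] := by
        rw [sum_congr rfl hinner, sum_add_distrib, ← nestedSum_cons, ← nestedSum_singleton]
        ring

lemma IsRecipSeq.two_mul_nestedSum_two_one_one (hv : IsRecipSeq v (p - 1)) (hp : 3 < p) :
    2 * nestedSum v (p - 1) [2, 1, 1] = -nestedSum v (p - 1) [4] := by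
  have hcast : ((p - 1 : ℕ) : ZMod p) + 1 = 0 := by
    rw [natCast_pred_prime_add_one, ZMod.natCast_self]
  linear_combination 2 * hv.nestedSum_two_one_one hp -
    hv.two_mul_nestedSum_three_one hcast (by omega)

end FiniteField

section PadicInt

variable {p : ℕ} [Fact p.Prime] {u : ℕ → ℤ_[p]}

lemma natCast_dvd_iff_toZMod_eq_zero (x : ℤ_[p]) :
    (p : ℤ_[p]) ∣ x ↔ PadicInt.toZMod x = 0 := by
  rw [← RingHom.mem_ker, PadicInt.ker_toZMod, PadicInt.maximalIdeal_eq_span_p,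
    Ideal.mem_span_singleton]

lemma isUnit_natCast_of_pos_of_lt {m : ℕ} (hm : 0 < m) (hmp : m < p) : IsUnit (m : ℤ_[p]) := by
  rw [PadicInt.isUnit_iff, PadicInt.norm_natCast_eq_one_iff]
  exact Nat.coprime_of_lt_prime hm.ne' hmp Fact.out

lemma isRecipSeq_inverse :
    IsRecipSeq (fun i ↦ Ring.inverse ((i : ℤ_[p]) + 1)) (p - 1) := fun i hi ↦
  Ring.mul_inverse_cancel _ <| by
    exact_mod_cast isUnit_natCast_of_pos_of_lt (p := p) i.succ_pos (by omega)

lemma IsRecipSeq.nestedSum_one_eq_mul_sum (hu : IsRecipSeq u (p - 1)) (hp : p ≠ 2) :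
    nestedSum u (p - 1) [1] =
      p * ∑ k ∈ range (p - 1), u k ^ 2 * (oneSubProd u k).eval (p : ℤ_[p]) := by
  have hp0 : (p : ℤ_[p]) ≠ 0 := Nat.cast_ne_zero.2 (Fact.out : p.Prime).ne_zero
  have hsign : (-1 : ℤ_[p]) ^ (p - 1) = 1 := ((Fact.out : p.Prime).even_sub_one hp).neg_one_pow
  have h := hu.sq_mul_sum_sq_mul_eval_oneSubProd
  rw [natCast_pred_prime_add_one, hsign] at h
  refine mul_left_cancel₀ hp0 ?_
  linear_combination -h

lemma IsRecipSeq.dvd_two_mul_nestedSum_two_one_one_add (hu : IsRecipSeq u (p - 1)) (hp : 3 < p) :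
    (p : ℤ_[p]) ∣ 2 * nestedSum u (p - 1) [2, 1, 1] +
      ∑ i ∈ range (p - 1), (u i * u (p - 1 - 1 - i)) ^ 2 := by
  have hv : IsRecipSeq (fun i ↦ PadicInt.toZMod (u i)) (p - 1) := hu.map _
  have hcast : ((p - 1 : ℕ) : ZMod p) + 1 = 0 := by
    rw [natCast_pred_prime_add_one, ZMod.natCast_self]
  have hsum : PadicInt.toZMod (∑ i ∈ range (p - 1), (u i * u (p - 1 - 1 - i)) ^ 2) =
      nestedSum (fun i ↦ PadicInt.toZMod (u i)) (p - 1) [4] := by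
    simp only [map_sum, map_pow, map_mul, nestedSum_singleton]
    refine sum_congr rfl fun i hi ↦ ?_
    rw [hv.reflect_eq_neg hcast (mem_range.1 hi)]; ring
  rw [natCast_dvd_iff_toZMod_eq_zero, map_add, map_mul, map_ofNat, map_nestedSum, hsum,
    hv.two_mul_nestedSum_two_one_one hp, neg_add_cancel]

lemma IsRecipSeq.pow_four_dvd_three_mul_nestedSum_one_add (hu : IsRecipSeq u (p - 1)) (hp : 3 < p) :
    (p : ℤ_[p]) ^ 4 ∣ 3 * nestedSum u (p - 1) [1] + p ^ 2 * nestedSum u (p - 1) [2, 1] := by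
  have hpair := hu.four_mul_nestedSum_one_add
  rw [natCast_pred_prime_add_one] at hpair
  have hone := hu.nestedSum_one_eq_mul_sum (by omega)
  obtain ⟨c, hc⟩ := pow_dvd_sum_pow_mul_eval_oneSubProd_sub u (p - 1) 2 3 (p : ℤ_[p])
  simp only [sum_range_succ, range_zero, sum_empty, List.replicate_succ, List.replicate_zero] at hc
  obtain ⟨d, hd⟩ := hu.dvd_two_mul_nestedSum_two_one_one_add hp
  have htwo : IsUnit ((2 : ℕ) : ℤ_[p]) := isUnit_natCast_of_pos_of_lt two_pos (by omega)
  refine htwo.dvd_mul_left.1 ⟨2 * c + d, ?_⟩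
  push_cast
  linear_combination hpair + 2 * hone + 2 * p * hc + p ^ 3 * hd

lemma IsRecipSeq.coe_nestedSum (hu : IsRecipSeq u (p - 1)) (l : List ℕ) :
    ((nestedSum u (p - 1) l : ℤ_[p]) : ℚ_[p]) = (MHS (p - 1) l : ℚ_[p]) := by
  rw [mhs_eq_nestedSum]
  change PadicInt.Coe.ringHom _ = Rat.castHom ℚ_[p] _
  rw [map_nestedSum, map_nestedSum]
  refine nestedSum_congr (fun i hi ↦ ?_) l
  simpa using eq_inv_of_mul_eq_one_right (hu.map PadicInt.Coe.ringHom i hi)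

end PadicInt

/-- For every prime `p ≥ 5`, the `p`-adic valuation of
`H_{p-1}(1) + (1/3) p² H_{p-1}(2,1)` is at least `4`. -/
theorem weighted_wolstenholme_mod_p4 (p : ℕ) [Fact p.Prime] (hp : 5 ≤ p) :
    ‖((MHS (p - 1) [1] + (1 / 3) * (p : ℚ) ^ 2 * MHS (p - 1) [2, 1] : ℚ) : ℚ_[p])‖
      ≤ (p : ℝ) ^ (-4 : ℤ) := by
  have hu := isRecipSeq_inverse (p := p)
  set u : ℕ → ℤ_[p] := fun i ↦ Ring.inverse ((i : ℤ_[p]) + 1)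
  set x : ℤ_[p] := 3 * nestedSum u (p - 1) [1] + p ^ 2 * nestedSum u (p - 1) [2, 1]
  have hx : ‖x‖ ≤ (p : ℝ) ^ (-4 : ℤ) :=
    (PadicInt.norm_le_pow_iff_mem_span_pow x 4).2 <|
      Ideal.mem_span_singleton.2 (hu.pow_four_dvd_three_mul_nestedSum_one_add (by omega))
  have hcoe : (x : ℚ_[p]) = 3 *
      ((MHS (p - 1) [1] + (1 / 3) * (p : ℚ) ^ 2 * MHS (p - 1) [2, 1] : ℚ) : ℚ_[p]) := by
    simp only [x]
    push_cast [hu.coe_nestedSum, show ((3 : ℤ_[p]) : ℚ_[p]) = 3 from rfl]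
    ring
  have hthree : ‖(3 : ℚ_[p])‖ = 1 := by
    have h : IsUnit ((3 : ℕ) : ℤ_[p]) := isUnit_natCast_of_pos_of_lt three_pos (by omega)
    exact PadicInt.isUnit_iff.1 h
  calc _ = ‖(x : ℚ_[p])‖ := by rw [hcoe, norm_mul, hthree, one_mul]
    _ ≤ (p : ℝ) ^ (-4 : ℤ) := hx
end

section
/- For every prime p ≥ 5, the congruence H_{p−1}(1) + (1/3) p² H_{p−1}(2,1) − (1/6) p⁴ H_{p−1}(4,1) ≡ 0 (mod p⁵) holds; that is, the p-adic valuation of H_{p−1}(1) + (1/3) p² H_{p−1}(2,1) − (1/6) p⁴ H_{p−1}(4,1) is at least 5. -/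
/-!
The argument takes place in an arbitrary commutative ring in which `1, …, p - 1` are invertible;
write `H(s)` for `H_{p-1}(s)`. Expanding `1 / (p - n)` in powers of `p / n` gives, for every
weight `f`, a congruence between `∑ f(n) / (p - n) ^ a` and a combination of the sums
`p ^ i ∑ f(n) / n ^ (a + i)`. For `f = 1` this is the reflection of the power sums `H(a)`. Applied
to the convolution `∑_{x + y + z = p} 1 / (x y z ^ a)`, where partial fractions give
`f(n) = 2 H_{n-1}(1) / n`, it produces the double sums `H(a + 1, 1), H(a + 2, 1), …`. On the other
hand, `p = x + y + z` expresses `p` times a convolution by convolutions of lower weight. Comparing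
the two evaluations for `a = 1` and `a = 2` yields

* `H(3) ≡ -2 p H(3,1) - 3 p² H(4,1)` modulo `p³`,
* `6 H(1) ≡ p² (∑_{x + y + z = p} 1 / (x y z) - H(3))` modulo `p⁵`,

and substituting the first congruence and the expansion of the convolution into the second one
leaves exactly `p⁴ H(4,1) - 2 p² H(2,1)`.
-/

open Finset
open scoped Ring

section PowerExpansion

variable {R : Type*} [CommRing R]

theorem one_sub_mul_sum_choose_mul_pow (t : R) (a k : ℕ) :
    (1 - t) * ∑ i ∈ range k, ((a + 1 + i).choose (a + 1) : R) * t ^ i =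
      ∑ i ∈ range k, ((a + i).choose a : R) * t ^ i - ((a + k).choose (a + 1) : R) * t ^ k := by
  induction k with
  | zero => simp
  | succ k ih =>
    have pascal : ((a + 1 + k).choose (a + 1) : R) =
        (a + k).choose a + (a + k).choose (a + 1) := by
      rw [add_right_comm, Nat.choose_succ_succ, Nat.cast_add]
    rw [sum_range_succ, sum_range_succ, mul_add, ih, ← add_assoc a k 1, add_right_comm a k 1]
    linear_combination t ^ k * pascal

theorem pow_dvd_one_sub_pow_mul_sum_choose_sub_one (t : R) (a k : ℕ) :
    t ^ k ∣ (1 - t) ^ (a + 1) * ∑ i ∈ range k, ((a + i).choose a : R) * t ^ i - 1 := by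
  induction a with
  | zero => simp [mul_neg_geom_sum]
  | succ a ih =>
    rw [pow_succ, mul_assoc, one_sub_mul_sum_choose_mul_pow, mul_sub, sub_right_comm]
    exact dvd_sub ih (Dvd.intro_left _ (mul_assoc ..))

-- The relation between `u` and `v` says that `v = -u / (1 - q u)`.
theorem pow_dvd_pow_succ_sub_sum_choose {q u v : R} (hu : IsUnit u) (h : v * (1 - q * u) = -u)
    (a k : ℕ) :
    q ^ k ∣ v ^ (a + 1) - (-1) ^ (a + 1) *
      ∑ i ∈ range k, ((a + i).choose a : R) * q ^ i * u ^ (a + 1 + i) := by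
  have unit_w : IsUnit (1 - q * u) := isUnit_of_mul_isUnit_right (h ▸ hu.neg)
  rw [← (unit_w.pow (a + 1)).dvd_mul_left]
  have factor_u : ∑ i ∈ range k, ((a + i).choose a : R) * q ^ i * u ^ (a + 1 + i) =
      u ^ (a + 1) * ∑ i ∈ range k, ((a + i).choose a : R) * (q * u) ^ i := by
    rw [mul_sum]
    exact sum_congr rfl fun i _ => by ring
  have pow_h : v ^ (a + 1) * (1 - q * u) ^ (a + 1) = (-1) ^ (a + 1) * u ^ (a + 1) := by
    rw [← mul_pow, h, neg_pow]
  obtain ⟨c, hc⟩ := pow_dvd_one_sub_pow_mul_sum_choose_sub_one (q * u) a k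
  rw [factor_u]
  exact ⟨-((-1) ^ (a + 1) * u ^ (a + 1) * u ^ k * c), by
    linear_combination pow_h - (-1) ^ (a + 1) * u ^ (a + 1) * hc⟩

end PowerExpansion

section RingInverse

variable {R : Type*} [CommRing R]

theorem map_inverse_of_isUnit {S : Type*} [CommRing S] (f : R →+* S) {x : R} (hx : IsUnit x) :
    f x⁻¹ʳ = (f x)⁻¹ʳ := by
  refine (hx.map f).mul_left_cancel ?_
  rw [Ring.mul_inverse_cancel _ (hx.map f), ← map_mul, Ring.mul_inverse_cancel _ hx, map_one]

theorem inverse_mul_inverse_eq_inverse_add_mul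
    {x y : R} (hx : IsUnit x) (hy : IsUnit y) (hxy : IsUnit (x + y)) :
    x⁻¹ʳ * y⁻¹ʳ = (x + y)⁻¹ʳ * (x⁻¹ʳ + y⁻¹ʳ) := by
  have cancel_x := Ring.mul_inverse_cancel _ hx
  have cancel_y := Ring.mul_inverse_cancel _ hy
  have cancel_xy := Ring.mul_inverse_cancel _ hxy
  linear_combination (-(x⁻¹ʳ * y⁻¹ʳ)) * cancel_xy +
    (x + y)⁻¹ʳ * y⁻¹ʳ * cancel_x + (x + y)⁻¹ʳ * x⁻¹ʳ * cancel_y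

end RingInverse

section HarmonicSum

theorem sum_Ico_one_sub {M : Type*} [AddCommMonoid M] (f : ℕ → M) (n : ℕ) :
    ∑ m ∈ Ico 1 n, f (n - m) = ∑ m ∈ Ico 1 n, f m := by
  simpa using sum_Ico_reflect f 1 n.le_succ

/-- The multiple harmonic sum `∑_{n > n₁ > … > n_k ≥ 1} 1 / (n₁^{s₁} ⋯ n_k^{s_k})` with values in a
commutative ring, a version of `MHS` for congruences. The bound `n` is strict, so that this is
`H_{n-1}(s₁, …, s_k)`; non-invertible denominators contribute the junk value
`Ring.inverse m = 0`. -/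
noncomputable def harmonicSum (R : Type*) [CommRing R] : ℕ → List ℕ → R
  | _, [] => 1
  | n, s :: t => ∑ m ∈ Ico 1 n, (m : R)⁻¹ʳ ^ s * harmonicSum R m t

theorem MHS_eq_harmonicSum (n : ℕ) (s : List ℕ) : MHS n s = harmonicSum ℚ (n + 1) s := by
  induction s generalizing n with
  | nil => simp only [MHS, harmonicSum]
  | cons a s ih =>
    simp only [MHS, harmonicSum]
    refine sum_congr rfl fun m hm => ?_
    rw [ih, Nat.sub_add_cancel (mem_Icc.1 hm).1, Ring.inverse_eq_inv, one_div, inv_pow]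

variable {R : Type*} [CommRing R]

theorem map_harmonicSum {S : Type*} [CommRing S] (f : R →+* S) {n : ℕ}
    (hn : ∀ m ∈ Ico 1 n, IsUnit (m : R)) (s : List ℕ) :
    f (harmonicSum R n s) = harmonicSum S n s := by
  induction s generalizing n with
  | nil => simp only [harmonicSum, map_one]
  | cons a s ih =>
    simp only [harmonicSum, map_sum, map_mul, map_pow]
    refine sum_congr rfl fun m hm => ?_
    rw [map_inverse_of_isUnit f (hn m hm), map_natCast, ih fun l hl => hn l (by grind)]

theorem harmonicSum_succ_cons {n : ℕ} (hn : 1 ≤ n) (a : ℕ) (s : List ℕ) :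
    harmonicSum R (n + 1) (a :: s) =
      harmonicSum R n (a :: s) + (n : R)⁻¹ʳ ^ a * harmonicSum R n s := by
  simp only [harmonicSum, sum_Ico_succ_top hn]

theorem harmonicSum_mul_harmonicSum (n a b : ℕ) :
    harmonicSum R n [a] * harmonicSum R n [b] =
      harmonicSum R n [a, b] + harmonicSum R n [b, a] + harmonicSum R n [a + b] := by
  rcases Nat.eq_zero_or_pos n with rfl | hn
  · simp [harmonicSum]
  induction n, hn using Nat.le_induction with
  | base => simp [harmonicSum]
  | succ n hn ih =>
    have nil : harmonicSum R n [] = 1 := rfl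
    simp only [harmonicSum_succ_cons hn, nil]
    linear_combination ih

theorem pow_dvd_sum_mul_inverse_sub_pow {p : ℕ} (hp : ∀ n ∈ Ico 1 p, IsUnit (n : R)) (f : ℕ → R)
    (a k : ℕ) :
    (p : R) ^ k ∣ ∑ n ∈ Ico 1 p, f n * ((p - n : ℕ) : R)⁻¹ʳ ^ (a + 1) - (-1) ^ (a + 1) *
      ∑ i ∈ range k, ((a + i).choose a : R) * (p : R) ^ i *
        ∑ n ∈ Ico 1 p, f n * (n : R)⁻¹ʳ ^ (a + 1 + i) := by
  have termwise : ∑ i ∈ range k, ((a + i).choose a : R) * (p : R) ^ i *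
        ∑ n ∈ Ico 1 p, f n * (n : R)⁻¹ʳ ^ (a + 1 + i) =
      ∑ n ∈ Ico 1 p, f n *
        ∑ i ∈ range k, ((a + i).choose a : R) * (p : R) ^ i * (n : R)⁻¹ʳ ^ (a + 1 + i) := by
    simp only [mul_sum]
    rw [sum_comm]
    exact sum_congr rfl fun n _ => sum_congr rfl fun i _ => by ring
  rw [termwise, mul_sum, ← sum_sub_distrib]
  refine dvd_sum fun n hn => ?_
  rw [mul_left_comm, ← mul_sub]
  refine (pow_dvd_pow_succ_sub_sum_choose (hp n hn).ringInverse ?_ a k).mul_left _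
  have cancel := Ring.mul_inverse_cancel _ (hp n hn)
  have cancel_sub := Ring.mul_inverse_cancel _ (hp (p - n) (by grind))
  rw [Nat.cast_sub (mem_Ico.1 hn).2.le] at cancel_sub ⊢
  linear_combination (((p : R) - n)⁻¹ʳ) * (-cancel) - (n : R)⁻¹ʳ * cancel_sub

theorem pow_dvd_harmonicSum_singleton_sub_sum {p : ℕ} (hp : ∀ n ∈ Ico 1 p, IsUnit (n : R))
    (a k : ℕ) :
    (p : R) ^ k ∣ harmonicSum R p [a + 1] - (-1) ^ (a + 1) *
      ∑ i ∈ range k, ((a + i).choose a : R) * (p : R) ^ i * harmonicSum R p [a + 1 + i] := by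
  have reflect := sum_Ico_one_sub (fun n => (n : R)⁻¹ʳ ^ (a + 1)) p
  simpa only [harmonicSum, one_mul, mul_one, reflect] using
    pow_dvd_sum_mul_inverse_sub_pow hp (fun _ => 1) a k

end HarmonicSum

section TripleSum

/-- The convolution `∑_{x + y + z = p} 1 / (x^a y^b z^c)` over positive integers, parametrised by
`m = x < n = x + y < p`. -/
noncomputable def tripleSum (R : Type*) [CommRing R] (p a b c : ℕ) : R :=
  ∑ n ∈ Ico 1 p, ∑ m ∈ Ico 1 n,
    (m : R)⁻¹ʳ ^ a * ((n - m : ℕ) : R)⁻¹ʳ ^ b * ((p - n : ℕ) : R)⁻¹ʳ ^ c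

variable {R : Type*} [CommRing R]

theorem tripleSum_swap_left (p a b c : ℕ) : tripleSum R p a b c = tripleSum R p b a c := by
  refine sum_congr rfl fun n _ => ?_
  rw [← sum_Ico_one_sub]
  refine sum_congr rfl fun m hm => ?_
  rw [Nat.sub_sub_self (mem_Ico.1 hm).2.le, mul_comm (_ ^ a)]

theorem tripleSum_swap_right (p a b c : ℕ) : tripleSum R p a b c = tripleSum R p a c b := by
  unfold tripleSum
  rw [sum_sigma', sum_sigma']
  refine sum_nbij' (fun x => ⟨p + x.2 - x.1, x.2⟩) (fun x => ⟨p + x.2 - x.1, x.2⟩)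
    ?_ ?_ ?_ ?_ ?_
  all_goals rintro ⟨n, m⟩ hnm; simp only [mem_sigma, mem_Ico] at hnm ⊢
  · lia
  · lia
  · simp only [Sigma.mk.injEq, heq_eq_eq, and_true]; lia
  · simp only [Sigma.mk.injEq, heq_eq_eq, and_true]; lia
  · rw [show p + m - n - m = p - n by lia, show p - (p + m - n) = n - m by lia, mul_right_comm]

variable {p : ℕ} (hp : ∀ n ∈ Ico 1 p, IsUnit (n : R))
include hp

theorem natCast_mul_tripleSum (a b c : ℕ) :
    (p : R) * tripleSum R p (a + 1) (b + 1) (c + 1) =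
      tripleSum R p a (b + 1) (c + 1) + tripleSum R p (a + 1) b (c + 1) +
        tripleSum R p (a + 1) (b + 1) c := by
  simp only [tripleSum, mul_sum, ← sum_add_distrib]
  refine sum_congr rfl fun n hn => sum_congr rfl fun m hm => ?_
  have cancel_x := Ring.mul_inverse_cancel _ (hp m (by grind))
  have cancel_y := Ring.mul_inverse_cancel _ (hp (n - m) (by grind))
  have cancel_z := Ring.mul_inverse_cancel _ (hp (p - n) (by grind))
  have sum_eq : (p : R) = m + (n - m : ℕ) + (p - n : ℕ) := by
    rw [← Nat.cast_add, ← Nat.cast_add]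
    congr 1
    grind
  rw [sum_eq]
  generalize ((n - m : ℕ) : R) = y, ((p - n : ℕ) : R) = z at *
  linear_combination
    (m : R)⁻¹ʳ ^ a * y⁻¹ʳ ^ (b + 1) * z⁻¹ʳ ^ (c + 1) * cancel_x +
      (m : R)⁻¹ʳ ^ (a + 1) * y⁻¹ʳ ^ b * z⁻¹ʳ ^ (c + 1) * cancel_y +
      (m : R)⁻¹ʳ ^ (a + 1) * y⁻¹ʳ ^ (b + 1) * z⁻¹ʳ ^ c * cancel_z

theorem sum_inverse_mul_inverse_sub_pow_succ {n : ℕ} (hn : n ∈ Ico 1 p) (b : ℕ) :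
    ∑ m ∈ Ico 1 n, (m : R)⁻¹ʳ * ((n - m : ℕ) : R)⁻¹ʳ ^ (b + 1) =
      (n : R)⁻¹ʳ * (∑ m ∈ Ico 1 n, (m : R)⁻¹ʳ * ((n - m : ℕ) : R)⁻¹ʳ ^ b +
        harmonicSum R n [b + 1]) := by
  have reflect := sum_Ico_one_sub (fun m => (m : R)⁻¹ʳ ^ (b + 1)) n
  simp only [harmonicSum, mul_one, ← reflect, ← sum_add_distrib, mul_sum]
  refine sum_congr rfl fun m hm => ?_
  have add_sub : (m : R) + (n - m : ℕ) = n := by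
    rw [← Nat.cast_add, Nat.add_sub_cancel' (mem_Ico.1 hm).2.le]
  have fractions := inverse_mul_inverse_eq_inverse_add_mul
    (hp m (by grind)) (hp (n - m) (by grind)) (add_sub ▸ hp n hn)
  rw [add_sub] at fractions
  linear_combination ((n - m : ℕ) : R)⁻¹ʳ ^ b * fractions

theorem sum_inverse_mul_inverse_sub {n : ℕ} (hn : n ∈ Ico 1 p) :
    ∑ m ∈ Ico 1 n, (m : R)⁻¹ʳ * ((n - m : ℕ) : R)⁻¹ʳ =
      2 * (n : R)⁻¹ʳ * harmonicSum R n [1] := by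
  have recursion := sum_inverse_mul_inverse_sub_pow_succ hp hn 0
  have power_sum : ∑ m ∈ Ico 1 n, (m : R)⁻¹ʳ = harmonicSum R n [1] := by simp [harmonicSum]
  simp only [zero_add, pow_one, pow_zero, mul_one, power_sum] at recursion
  linear_combination recursion

theorem tripleSum_one_one (c : ℕ) :
    tripleSum R p 1 1 c =
      2 * ∑ n ∈ Ico 1 p, (n : R)⁻¹ʳ * harmonicSum R n [1] * ((p - n : ℕ) : R)⁻¹ʳ ^ c := by
  simp only [tripleSum, pow_one, mul_sum]
  refine sum_congr rfl fun n hn => ?_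
  rw [← sum_mul, sum_inverse_mul_inverse_sub hp hn]
  ring

theorem tripleSum_one_one_zero : tripleSum R p 1 1 0 = 2 * harmonicSum R p [1, 1] := by
  rw [tripleSum_one_one hp, harmonicSum]
  simp only [pow_zero, pow_one, mul_one]

theorem tripleSum_one_two_zero :
    tripleSum R p 1 2 0 = 2 * harmonicSum R p [2, 1] + harmonicSum R p [1, 2] := by
  rw [harmonicSum, harmonicSum, mul_sum, ← sum_add_distrib]
  refine sum_congr rfl fun n hn => ?_
  have recursion := sum_inverse_mul_inverse_sub_pow_succ hp hn 1
  simp only [pow_one, Nat.reduceAdd, sum_inverse_mul_inverse_sub hp hn] at recursion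
  simp only [pow_one, pow_zero, mul_one, recursion]
  ring

theorem pow_dvd_tripleSum_one_one_sub_sum (a k : ℕ) :
    (p : R) ^ k ∣ tripleSum R p 1 1 (a + 1) - 2 * (-1) ^ (a + 1) *
      ∑ i ∈ range k, ((a + i).choose a : R) * (p : R) ^ i * harmonicSum R p [a + 2 + i, 1] := by
  have double_sum (i : ℕ) : harmonicSum R p [a + 2 + i, 1] =
      ∑ n ∈ Ico 1 p, (n : R)⁻¹ʳ * harmonicSum R n [1] * (n : R)⁻¹ʳ ^ (a + 1 + i) := by
    rw [harmonicSum]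
    exact sum_congr rfl fun n _ => by ring
  simp only [tripleSum_one_one hp, double_sum, mul_assoc (2 : R), ← mul_sub]
  exact (pow_dvd_sum_mul_inverse_sub_pow hp _ a k).mul_left 2

theorem pow_three_dvd_tripleSum_one_one_one_add :
    (p : R) ^ 3 ∣ tripleSum R p 1 1 1 + 2 * (harmonicSum R p [2, 1] +
      p * harmonicSum R p [3, 1] + p ^ 2 * harmonicSum R p [4, 1]) := by
  convert pow_dvd_tripleSum_one_one_sub_sum hp 0 3 using 1
  simp [sum_range_succ]

theorem sq_dvd_tripleSum_one_one_two_sub :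
    (p : R) ^ 2 ∣ tripleSum R p 1 1 2 -
      2 * (harmonicSum R p [3, 1] + 2 * p * harmonicSum R p [4, 1]) := by
  convert pow_dvd_tripleSum_one_one_sub_sum hp 1 2 using 1
  simp [sum_range_succ, one_add_one_eq_two]

theorem natCast_mul_tripleSum_one_one_one :
    (p : R) * tripleSum R p 1 1 1 = 6 * harmonicSum R p [1, 1] := by
  rw [natCast_mul_tripleSum hp, tripleSum_swap_left p 0, tripleSum_swap_right p _ 0,
    tripleSum_one_one_zero hp]
  ring

theorem natCast_mul_tripleSum_one_one_two :
    (p : R) * tripleSum R p 1 1 2 =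
      tripleSum R p 1 1 1 + 4 * harmonicSum R p [2, 1] + 2 * harmonicSum R p [1, 2] := by
  rw [natCast_mul_tripleSum hp, tripleSum_swap_left p 0, tripleSum_swap_right p _ 0,
    tripleSum_one_two_zero hp]
  ring

end TripleSum

section Wolstenholme

variable {R : Type*} [CommRing R] {p : ℕ} (hp : ∀ n ∈ Ico 1 p, IsUnit (n : R))
include hp

theorem dvd_harmonicSum_odd (h2p : 2 < p) {a : ℕ} (ha : Odd a) : (p : R) ∣ harmonicSum R p [a] := by
  have unit_two : IsUnit (2 : R) := mod_cast hp 2 (by grind)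
  obtain ⟨b, rfl⟩ := ha
  have reflect := pow_dvd_harmonicSum_singleton_sub_sum hp (2 * b) 1
  rw [← unit_two.dvd_mul_left]
  simpa [pow_succ, two_mul] using reflect

variable (h3p : 3 < p)
include h3p

theorem dvd_harmonicSum_two : (p : R) ∣ harmonicSum R p [2] := by
  have unit_three : IsUnit (3 : R) := mod_cast hp 3 (by grind)
  have stuffle := harmonicSum_mul_harmonicSum (R := R) p 1 1
  have weight_two := natCast_mul_tripleSum_one_one_one hp
  obtain ⟨x, hx⟩ := dvd_harmonicSum_odd hp (by lia) odd_one
  rw [← unit_three.dvd_mul_left]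
  exact ⟨3 * x * harmonicSum R p [1] - tripleSum R p 1 1 1, by
    linear_combination weight_two - 3 * stuffle + 3 * harmonicSum R p [1] * hx⟩

theorem sq_dvd_harmonicSum_one : (p : R) ^ 2 ∣ harmonicSum R p [1] := by
  have unit_two : IsUnit (2 : R) := mod_cast hp 2 (by grind)
  have reflect : (p : R) ^ 2 ∣ 2 * harmonicSum R p [1] + p * harmonicSum R p [2] := by
    convert pow_dvd_harmonicSum_singleton_sub_sum hp 0 2 using 1
    simp only [sum_range_succ, range_one, sum_singleton, zero_add, add_zero, Nat.reduceAdd,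
      Nat.choose_zero_right, Nat.cast_one, pow_zero, pow_one, one_mul]
    ring
  have middle : (p : R) ^ 2 ∣ p * harmonicSum R p [2] := by
    simpa only [sq] using mul_dvd_mul_left (p : R) (dvd_harmonicSum_two hp h3p)
  exact unit_two.dvd_mul_left.1 ((dvd_add_left middle).1 reflect)

theorem pow_three_dvd_harmonicSum_three_add :
    (p : R) ^ 3 ∣ harmonicSum R p [3] + 2 * p * harmonicSum R p [3, 1] +
      3 * p ^ 2 * harmonicSum R p [4, 1] := by
  have unit_two : IsUnit (2 : R) := mod_cast hp 2 (by grind)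
  rw [← unit_two.dvd_mul_left]
  have stuffle := harmonicSum_mul_harmonicSum (R := R) p 1 2
  have weight_three := natCast_mul_tripleSum_one_one_two hp
  obtain ⟨x, hx⟩ := sq_dvd_harmonicSum_one hp h3p
  obtain ⟨y, hy⟩ := dvd_harmonicSum_two hp h3p
  obtain ⟨r, hr⟩ := pow_three_dvd_tripleSum_one_one_one_add hp
  obtain ⟨s, hs⟩ := sq_dvd_tripleSum_one_one_two_sub hp
  refine ⟨2 * x * y + r - s, ?_⟩
  linear_combination weight_three - p * hs + hr - 2 * stuffle + 2 * harmonicSum R p [2] * hx +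
    2 * p ^ 2 * x * hy

theorem pow_five_dvd_six_mul_harmonicSum_one_sub :
    (p : R) ^ 5 ∣ 6 * harmonicSum R p [1] -
      p ^ 2 * (tripleSum R p 1 1 1 - harmonicSum R p [3]) := by
  have stuffle := harmonicSum_mul_harmonicSum (R := R) p 1 1
  have weight_two := natCast_mul_tripleSum_one_one_one hp
  obtain ⟨x, hx⟩ := sq_dvd_harmonicSum_one hp h3p
  obtain ⟨y, hy⟩ := dvd_harmonicSum_odd hp (by lia) (a := 5) (by decide)
  obtain ⟨r, hr⟩ : (p : R) ^ 5 ∣ 2 * harmonicSum R p [1] + p * harmonicSum R p [2] +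
      p ^ 2 * harmonicSum R p [3] + p ^ 3 * harmonicSum R p [4] +
      p ^ 4 * harmonicSum R p [5] := by
    convert pow_dvd_harmonicSum_singleton_sub_sum hp 0 5 using 1
    simp only [sum_range_succ, range_one, sum_singleton, zero_add, add_zero, Nat.reduceAdd,
      Nat.choose_zero_right, Nat.cast_one, pow_zero, pow_one, one_mul]
    ring
  obtain ⟨s, hs⟩ : (p : R) ^ 3 ∣ 2 * harmonicSum R p [3] + 3 * p * harmonicSum R p [4] +
      6 * p ^ 2 * harmonicSum R p [5] := by
    convert pow_dvd_harmonicSum_singleton_sub_sum hp 2 3 using 1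
    simp only [sum_range_succ, range_one, sum_singleton, add_zero, Nat.reduceAdd, Nat.choose,
      Nat.cast_one, Nat.cast_ofNat, pow_zero, pow_one, mul_one, one_mul]
    ring
  refine ⟨3 * r - 3 * x ^ 2 - s + 3 * y, ?_⟩
  linear_combination 3 * hr - p ^ 2 * hs + 3 * p ^ 4 * hy + 3 * p * stuffle - p * weight_two
    - 3 * p * (harmonicSum R p [1] + p ^ 2 * x) * hx

theorem weighted_wolstenholme_mod_p5_general :
    (p : R) ^ 5 ∣ 6 * harmonicSum R p [1] + 2 * p ^ 2 * harmonicSum R p [2, 1] -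
      p ^ 4 * harmonicSum R p [4, 1] := by
  obtain ⟨r, hr⟩ := pow_five_dvd_six_mul_harmonicSum_one_sub hp h3p
  obtain ⟨s, hs⟩ := pow_three_dvd_tripleSum_one_one_one_add hp
  obtain ⟨t, ht⟩ := pow_three_dvd_harmonicSum_three_add hp h3p
  exact ⟨r + s - t, by linear_combination hr + p ^ 2 * hs - p ^ 2 * ht⟩

end Wolstenholme

section Padic

variable {p : ℕ} [Fact p.Prime]

theorem coprime_six_of_five_le (hp : 5 ≤ p) : p.Coprime 6 := by
  have coprime_two : p.Coprime 2 := (Nat.coprime_primes Fact.out Nat.prime_two).2 (by lia)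
  have coprime_three : p.Coprime 3 := (Nat.coprime_primes Fact.out Nat.prime_three).2 (by lia)
  exact coprime_two.mul_right coprime_three

theorem isUnit_natCast_padicInt {n : ℕ} (hn : n ∈ Ico 1 p) : IsUnit (n : ℤ_[p]) := by
  rw [PadicInt.isUnit_iff, PadicInt.norm_natCast_eq_one_iff]
  exact Nat.coprime_of_lt_prime (by grind) (mem_Ico.1 hn).2 Fact.out

theorem coeRingHom_harmonicSum (s : List ℕ) :
    PadicInt.Coe.ringHom (harmonicSum ℤ_[p] p s) = ((MHS (p - 1) s : ℚ) : ℚ_[p]) := by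
  have from_int := map_harmonicSum (n := p) PadicInt.Coe.ringHom
    (fun _ => isUnit_natCast_padicInt) s
  have from_rat := map_harmonicSum (n := p) (Rat.castHom ℚ_[p])
    (fun m hm => isUnit_iff_ne_zero.2 (Nat.cast_ne_zero.2 (by grind))) s
  rw [MHS_eq_harmonicSum, Nat.sub_add_cancel (Fact.out : p.Prime).one_le]
  exact from_int.trans from_rat.symm

theorem norm_le_zpow_neg_of_pow_dvd {x : ℚ_[p]} {y : ℤ_[p]} {c k : ℕ} (hc : p.Coprime c)
    (hy : PadicInt.Coe.ringHom y = c * x) (h : (p : ℤ_[p]) ^ k ∣ y) : ‖x‖ ≤ (p : ℝ) ^ (-k : ℤ) := by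
  have norm_eq : ‖y‖ = ‖x‖ := calc
    ‖y‖ = ‖PadicInt.Coe.ringHom y‖ := PadicInt.norm_def
    _ = ‖x‖ := by rw [hy, norm_mul, Padic.norm_natCast_eq_one_iff.2 hc, one_mul]
  rw [← norm_eq, PadicInt.norm_le_pow_iff_mem_span_pow, Ideal.mem_span_singleton]
  exact h

end Padic

/-- For every prime `p ≥ 5`, the `p`-adic valuation of
`H_{p-1}(1) + (1/3) p² H_{p-1}(2,1) - (1/6) p⁴ H_{p-1}(4,1)` is at least `5`. -/
theorem weighted_wolstenholme_mod_p5 (p : ℕ) [Fact p.Prime] (hp : 5 ≤ p) :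
    ‖((MHS (p - 1) [1] + (1 / 3) * (p : ℚ) ^ 2 * MHS (p - 1) [2, 1]
        - (1 / 6) * (p : ℚ) ^ 4 * MHS (p - 1) [4, 1] : ℚ) : ℚ_[p])‖
      ≤ (p : ℝ) ^ (-5 : ℤ) := by
  refine norm_le_zpow_neg_of_pow_dvd (coprime_six_of_five_le hp) ?_
    (weighted_wolstenholme_mod_p5_general (fun _ => isUnit_natCast_padicInt) (by lia))
  simp only [map_sub, map_add, map_mul, map_pow, map_natCast, map_ofNat, coeRingHom_harmonicSum]
  push_cast
  ring
end
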